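/- arXiv:1808.06568 — 4 statements merged into one kernel-verified Lean document; each statement's English description precedes it below -/
import Mathlib

section
/- Let P be a poset equipped with the Alexandrov topology in which the open sets are exactly the upward-closed subsets (cosieves) of P, and let C be a category with all small limits. Let j : P → Op(P)ᵒᵖ be the full embedding sending x to the principal open set P_{≥x}. If a presheaf F : Op(P)ᵒᵖ → C is a right Kan extension of its restriction F ∘ j along j, then F is a sheaf: for every open U and every covering sieve J on U (a sieve of open subsets of U whose union is U), the canonical map F(U) → lim_{V ∈ J} F(V) is an isomorphism. -/
/-!
Since `C` has limits of size `u`, the right Kan extension is pointwise: `F(U)` is the limit of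
`F(P_{≥p})` over the principal opens `P_{≥p} ⊆ U`. A covering sieve on `U` contains all of these
principal opens (`principal_mem_of_covering`), so a compatible family on the sieve restricts to a
cone over the principal opens inside `U` and hence induces a unique map to `F(U)`. That this map
restricts to the given family on each member `V` of the sieve is checked on the principal opens
inside `V`, whose restrictions out of `F(V)` are jointly monic for the same reason.
-/


/-!
STATEMENT 3: Let `P` be a poset with the Alexandrov topology whose open sets are exactly
the upper sets (cosieves), and `C` a category with all small limits. Let
`j : P ⥤ Op(P)ᵒᵖ` be the full embedding `x ↦ P_{≥x}`. If a presheaf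
`F : Op(P)ᵒᵖ ⥤ C` is a right Kan extension of its restriction `F ∘ j` along `j`, then
`F` is a sheaf (for the Grothendieck topology on `Op(P)` whose covering sieves on `U`
are the sieves of opens whose union is `U`).
-/

open CategoryTheory TopologicalSpace

universe u v w

/-- The Alexandrov topology on a poset: the open sets are exactly the upper sets
(cosieves). -/
instance alexandrov (P : Type u) [PartialOrder P] : TopologicalSpace P where
  IsOpen s := IsUpperSet s
  isOpen_univ := isUpperSet_univ
  isOpen_inter _ _ hs ht := hs.inter ht
  isOpen_sUnion _ h := isUpperSet_sUnion h

/-- The full embedding `j : P ⥤ Op(P)ᵒᵖ` sending `x` to the principal open `P_{≥x}`. -/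
def jEmbed (P : Type u) [PartialOrder P] : P ⥤ (Opens P)ᵒᵖ where
  obj x := Opposite.op ⟨Set.Ici x, isUpperSet_Ici x⟩
  map {x y} f := (homOfLE (fun z hz => (leOfHom f).trans hz :
    (⟨Set.Ici y, isUpperSet_Ici y⟩ : Opens P) ≤ ⟨Set.Ici x, isUpperSet_Ici x⟩)).op
  map_id _ := rfl
  map_comp _ _ := rfl

/-- A covering sieve contains every inclusion of a principal open: the member of the sieve
covering `p` is an upper set containing `p`, hence contains all of `P_{≥p}`. -/
lemma principal_mem_of_covering {P : Type u} [PartialOrder P] {U : Opens P} (S : Sieve U)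
    (hS : S ∈ Opens.grothendieckTopology P U) (p : P) (f : ((jEmbed P).obj p).unop ⟶ U) :
    S f := by
  obtain ⟨V, g, hg, hpV⟩ := hS p (f.le (le_refl p : p ∈ Set.Ici p))
  have hle : ((jEmbed P).obj p).unop ≤ V := fun q hq => (V.isOpen : IsUpperSet V.carrier) hq hpV
  exact Subsingleton.elim (homOfLE hle ≫ g) f ▸ S.downward_closed hg (homOfLE hle)

theorem stmt3 (P : Type u) [PartialOrder P]
    (C : Type v) [Category.{w} C] [Limits.HasLimitsOfSize.{u, u} C]
    (F : (Opens P)ᵒᵖ ⥤ C)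
    (hF : F.IsRightKanExtension (𝟙 (jEmbed P ⋙ F))) :
    Presheaf.IsSheaf (Opens.grothendieckTopology P) F := by
  -- Limits of size `u` suffice for the Kan extension to be pointwise.
  have hpt := Functor.isPointwiseRightKanExtensionOfIsRightKanExtension
    (L := jEmbed P) F (𝟙 (jEmbed P ⋙ F))
  intro E U S hS x hx
  rw [Presieve.compatible_iff_sieveCompatible] at hx
  have hmem (g : StructuredArrow (Opposite.op U) (jEmbed P)) : S g.hom.unop :=
    principal_mem_of_covering S hS g.right g.hom.unop
  -- Equal morphisms of the sieve carry equal values, whatever the proofs of membership.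
  have hcongr {V : Opens P} {f f' : V ⟶ U} (h : f = f') (hf : S f) (hf' : S f') :
      x f hf = x f' hf' := by subst h; rfl
  have hcompat {V W : Opens P} (f : V ⟶ U) (g : W ⟶ V) (hf : S f) (k : W ⟶ U) (hk : S k) :
      (x f hf : E ⟶ _) ≫ F.map g.op = x k hk :=
    (hx f g hf).symm.trans (hcongr (Subsingleton.elim _ _) _ _)
  let c : Limits.Cone (StructuredArrow.proj (Opposite.op U) (jEmbed P) ⋙ (jEmbed P ⋙ F)) :=
    { pt := E
      π :=
        { app := fun g => x g.hom.unop (hmem g)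
          naturality := fun g g' φ => (Category.id_comp _).trans
            (hcompat g.hom.unop ((jEmbed P).map φ.right).unop (hmem g) g'.hom.unop
              (hmem g')).symm } }
  have hfac (g : StructuredArrow (Opposite.op U) (jEmbed P)) :
      (hpt (Opposite.op U)).lift c ≫ F.map g.hom = x g.hom.unop (hmem g) :=
    (congrArg (_ ≫ ·) (Category.comp_id (F.map g.hom)).symm).trans
      ((hpt (Opposite.op U)).fac c g)
  refine ⟨(hpt (Opposite.op U)).lift c, ?_, ?_⟩
  · intro V f hf
    -- Over `V`, equality is tested after restriction to the principal opens inside `V`.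
    refine (hpt (Opposite.op V)).hom_ext fun g => ?_
    have h1 := hfac (StructuredArrow.mk (f.op ≫ g.hom))
    have h2 := hcompat f g.hom.unop hf (f.op ≫ g.hom).unop
      (hmem (StructuredArrow.mk (f.op ≫ g.hom)))
    have h3 : ((hpt (Opposite.op U)).lift c ≫ F.map f.op) ≫ F.map g.hom =
        (x f hf : E ⟶ _) ≫ F.map g.hom :=
      (Category.assoc _ _ _).trans
        ((congrArg (_ ≫ ·) (F.map_comp f.op g.hom).symm).trans (h1.trans h2.symm))
    exact (congrArg (_ ≫ ·) (Category.comp_id (F.map g.hom))).trans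
      (h3.trans (congrArg (_ ≫ ·) (Category.comp_id (F.map g.hom)).symm))
  · intro t ht
    refine (hpt (Opposite.op U)).hom_ext fun g => ?_
    have h3 : (t : E ⟶ _) ≫ F.map g.hom = (hpt (Opposite.op U)).lift c ≫ F.map g.hom :=
      (ht g.hom.unop (hmem g)).trans (hfac g).symm
    exact (congrArg (_ ≫ ·) (Category.comp_id (F.map g.hom))).trans
      (h3.trans (congrArg (_ ≫ ·) (Category.comp_id (F.map g.hom)).symm))
end

section
/- Let K be an abstract simplicial complex with poset of simplices P, let σ ∈ K, and let L = {τ ∈ K : σ ∪ τ ∈ K and ¬(σ ⊆ τ)} be the link of σ. For a nonempty proper subset s ⊊ σ, let A_s = {τ ∈ L : τ ∩ σ ⊆ s} and let B_s = {τ ∈ A_s : s ⊆ τ}, each ordered by inclusion. Then the map r_s : A_s → B_s given by r_s(τ) = τ ∪ s is a well-defined monotone map which, as a functor, is left adjoint to the inclusion B_s ↪ A_s; consequently the inclusion functor B_s ↪ A_s is final. Moreover B_s has a least element, namely s itself. -/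
/-!
For `τ ∈ A_s` and `ρ ∈ B_s` one has `τ ∪ s ⊆ ρ ↔ τ ⊆ ρ`, because `s ⊆ ρ`. Hence, once `τ ∪ s` is
known to lie in `B_s` (`exists_mem_BSet_union`), the map `τ ↦ τ ∪ s` is left adjoint to the
inclusion, which gives its monotonicity and the finality of the inclusion. That `s` belongs to
`B_s` uses `s ⊊ σ`, and it is least there by definition of `B_s`.
-/

/-!
STATEMENT 8: For an abstract simplicial complex `K` with poset of simplices `P`, a face
`σ ∈ K`, the link `L = {τ ∈ K : σ ∪ τ ∈ K ∧ ¬(σ ⊆ τ)}` of `σ`, and a nonempty proper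
subset `s ⊊ σ`, with `A_s = {τ ∈ L : τ ∩ σ ⊆ s}` and `B_s = {τ ∈ A_s : s ⊆ τ}`:
the map `r_s(τ) = τ ∪ s` is a well-defined monotone map `A_s → B_s` which, as a functor,
is left adjoint to the inclusion `B_s ↪ A_s` (for posets: a Galois connection);
consequently the inclusion functor `B_s ↪ A_s` is final. Moreover `B_s` has a least
element, namely `s` itself.
-/

open CategoryTheory

universe u

/-- The poset of simplices of an abstract simplicial complex `K`: faces ordered by inclusion. -/
abbrev SimplexPoset {V : Type u} (K : Set (Finset V)) : Type u := {τ : Finset V // τ ∈ K}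

/-- The link of a face `σ`, as a subset of the poset of simplices. -/
def linkSet {V : Type u} [DecidableEq V] (K : Set (Finset V)) (σ : Finset V) :
    Set (SimplexPoset K) :=
  {τ | σ ∪ (τ : Finset V) ∈ K ∧ ¬ σ ⊆ (τ : Finset V)}

/-- The subset `A_s = {τ ∈ L : τ ∩ σ ⊆ s}` of the poset of simplices. -/
def ASet {V : Type u} [DecidableEq V] (K : Set (Finset V)) (σ s : Finset V) :
    Set (SimplexPoset K) :=
  {τ | τ ∈ linkSet K σ ∧ (τ : Finset V) ∩ σ ⊆ s}

/-- The subset `B_s = {τ ∈ A_s : s ⊆ τ}`, the cosieve in `A_s` generated by `s`. -/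
def BSet {V : Type u} [DecidableEq V] (K : Set (Finset V)) (σ s : Finset V) :
    Set (SimplexPoset K) :=
  {τ | τ ∈ ASet K σ s ∧ s ⊆ (τ : Finset V)}

/-- Adjoining `s` to a face of `A_s` gives a face of `B_s`. The result lies below `σ ∪ τ`, and it
cannot contain `σ`: since `τ ∩ σ ⊆ s`, that would force `σ ⊆ s`. -/
theorem exists_mem_BSet_union {V : Type u} [DecidableEq V] {K : Set (Finset V)}
    (hdc : ∀ t ∈ K, ∀ t' : Finset V, t' ⊆ t → t'.Nonempty → t' ∈ K)
    {σ s : Finset V} (hs : s ⊆ σ) (hsne : s.Nonempty) (hsproper : s ≠ σ)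
    (τ : ASet K σ s) : ∃ ρ : BSet K σ s, (ρ.1 : Finset V) = (τ.1 : Finset V) ∪ s := by
  obtain ⟨⟨τ, hτ⟩, ⟨hστ, -⟩, hτs⟩ := τ
  simp only at hστ hτs ⊢
  have hunion : σ ∪ (τ ∪ s) = σ ∪ τ := by grind
  refine ⟨⟨⟨τ ∪ s, hdc _ hστ _ (by grind) (hsne.mono Finset.subset_union_right)⟩,
    ⟨⟨?_, fun hsub => hsproper (hs.antisymm ?_)⟩, ?_⟩, Finset.subset_union_right⟩, rfl⟩
  · simpa only [hunion] using hστ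
  · simp only at hsub
    grind
  · simp only
    grind

theorem stmt8 (V : Type u) [DecidableEq V] (K : Set (Finset V))
    (hne : ∀ t ∈ K, t.Nonempty)
    (hdc : ∀ t ∈ K, ∀ t' : Finset V, t' ⊆ t → t'.Nonempty → t' ∈ K)
    (σ : Finset V) (hσ : σ ∈ K)
    (s : Finset V) (hs : s ⊆ σ) (hsne : s.Nonempty) (hsproper : s ≠ σ) :
    ∃ h : BSet K σ s ⊆ ASet (V := V) K σ s,
      (∃ r : ↥(ASet (V := V) K σ s) → ↥(BSet K σ s),
        (∀ τ : ↥(ASet (V := V) K σ s),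
          ((r τ : SimplexPoset K) : Finset V) = ((τ : SimplexPoset K) : Finset V) ∪ s) ∧
        Monotone r ∧
        GaloisConnection r (Set.inclusion h)) ∧
      Functor.Final
        ((show Monotone (Set.inclusion h) from fun _ _ hle => hle).functor) ∧
      (∃ m : SimplexPoset K, (m : Finset V) = s ∧ IsLeast (BSet K σ s) m) := by
  have h : BSet K σ s ⊆ ASet K σ s := fun _ hτ => hτ.1
  choose r hr using exists_mem_BSet_union (K := K) hdc hs hsne hsproper
  have gc : GaloisConnection r (Set.inclusion h) := by
    intro τ ρ
    change ((r τ).1 : Finset V) ⊆ ρ.1.1 ↔ (τ.1 : Finset V) ⊆ ρ.1.1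
    rw [hr, Finset.union_subset_iff]
    exact and_iff_left ρ.2.2
  refine ⟨h, ⟨r, hr, gc.monotone_l, gc⟩, Functor.final_of_adjunction gc.adjunction,
    ⟨s, hdc σ hσ s hs hsne⟩, rfl, ⟨⟨⟨?_, ?_⟩, Finset.inter_subset_left⟩, subset_rfl⟩,
    fun ρ hρ => hρ.2⟩
  · simpa only [Finset.union_eq_left.mpr hs] using hσ
  · exact fun hsub => hsproper (hs.antisymm hsub)
end

section
/- Fix n ≥ 0 and let Δ_inj denote the category whose objects are the finite nonempty linearly ordered sets [m] = {0 < 1 < ... < m} and whose morphisms are the strictly monotone (injective order-preserving) maps. Let D_n be the category whose objects are pairs ([m], i) with i : [n] → [m] a strictly monotone map and m > n, and whose morphisms ([m], i) → ([m'], j) are strictly monotone maps f : [m] → [m'] with f ∘ i = j. Given a strictly monotone i : [n] → [m], let i^c : [m−n−1] → [m] be the strictly monotone map whose image is the complement of the image of i. Define γ_n : D_n → Δ_inj by γ_n([m], i) = [m−n−1], and on a morphism f : ([m], i) → ([m'], j), γ_n(f) is the unique strictly monotone map [m−n−1] → [m'−n−1] satisfying f ∘ i^c = j^c ∘ γ_n(f).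 Then γ_n is a well-defined functor and is a Grothendieck fibration: every morphism g : [k] → [k'] in Δ_inj and every object ([m'], j) of D_n with γ_n([m'], j) = [k'] admits a cartesian lift f : ([m], i) → ([m'], j) with γ_n(f) = g. -/
/-!
The complement `i^c` of an object is strictly monotone with range the complement of that of `i`,
so a morphism `f` carries `X^c` into `Y^c` and `γ f` is the induced map (`gammaMap`); functoriality
follows since complement maps are injective.

Every morphism `f : e' → e` of `D_n` is `γ`-cartesian (`gamma_cartesian`): if `γ f' = γ f ∘ h`,
then `f'` sends marked points into `range e.i ⊆ range f` and the other points into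
`e^c (range (γ f)) ⊆ range f`, hence factors uniquely through the injection `f`. So only existence
of lifts is left: over `g : [k] → γ e`, take the order embedding of `range e.i ∪ e^c (range g)`,
which has `n + k + 2` elements, into `[e.m]` (`exists_lift`).
-/

/-!
STATEMENT 12: Fix `n ≥ 0`. Let `Δ_inj` be the category of finite nonempty linear orders
`[m] = {0 < ... < m}` with strictly monotone maps, and let `D_n` be the category of pairs
`([m], i)` with `i : [n] → [m]` strictly monotone and `m > n`, with morphisms
`f : ([m], i) → ([m'], j)` the strictly monotone `f` with `f ∘ i = j`.  For strictly
monotone `i : [n] → [m]` let `i^c : [m−n−1] → [m]` be the strictly monotone map whose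
image is the complement of the image of `i`.  Define `γ_n : D_n → Δ_inj` on objects by
`γ_n([m], i) = [m−n−1]` and on morphisms by the characterizing equation
`f ∘ i^c = j^c ∘ γ_n(f)`.  Then `γ_n` is a well-defined functor and a Grothendieck
fibration: every `g : [k] → [k']` in `Δ_inj` and every object `([m'], j)` over `[k']`
admits a cartesian lift `f` with `γ_n(f) = g`.
-/

open CategoryTheory

/-- The category `Δ_inj`: objects are the finite nonempty linear orders
`[m] = {0 < 1 < ... < m}` (encoded by `m : ℕ`), morphisms `[a] → [b]` are the strictly
monotone (= injective order-preserving) maps `Fin (a+1) → Fin (b+1)`. -/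
structure DeltaInj where
  n : ℕ

instance : Category DeltaInj where
  Hom a b := {f : Fin (a.n + 1) → Fin (b.n + 1) // StrictMono f}
  id a := ⟨id, strictMono_id⟩
  comp f g := ⟨g.1 ∘ f.1, g.2.comp f.2⟩
  id_comp f := Subtype.ext rfl
  comp_id f := Subtype.ext rfl
  assoc f g h := Subtype.ext rfl

/-- The category `D_n` of pairs `([m], i)` with `m > n` and `i : [n] → [m]` strictly
monotone; morphisms `([m], i) → ([m'], j)` are strictly monotone maps `f : [m] → [m']`
with `f ∘ i = j`. -/
structure DObj (n : ℕ) where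
  m : ℕ
  hm : n < m
  i : Fin (n + 1) → Fin (m + 1)
  hi : StrictMono i

instance (n : ℕ) : Category (DObj n) where
  Hom X Y := {f : Fin (X.m + 1) → Fin (Y.m + 1) // StrictMono f ∧ f ∘ X.i = Y.i}
  id X := ⟨id, strictMono_id, rfl⟩
  comp {X Y Z} f g := ⟨g.1 ∘ f.1, (g.2.1.comp f.2.1), by
    rw [Function.comp_assoc, f.2.2, g.2.2]⟩
  id_comp f := Subtype.ext rfl
  comp_id f := Subtype.ext rfl
  assoc f g h := Subtype.ext rfl

/-- The complementary map `i^c : [m−n−1] → [m]` of an injective map `i : [n] → [m]`: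
the unique strictly monotone map whose image is the complement of the image of `i`
(note `Fin (m - n) = Fin ((m - n - 1) + 1)` when `n < m`). -/
def complMap {n m : ℕ} (i : Fin (n + 1) → Fin (m + 1)) (hi : Function.Injective i) :
    Fin (m - n) → Fin (m + 1) :=
  fun x => ((Finset.univ.image i)ᶜ.orderIsoOfFin (k := m - n)
    (by
      rw [Finset.card_compl, Finset.card_image_of_injective _ hi]
      simp [Nat.succ_sub_succ]) x : Fin (m + 1))

/-- A morphism `f : e' → e` is `p`-cartesian if for every `f' : e'' → e` and every
factorization `p(f') = p(f) ∘ h` in the base, there is a unique lift `h̃ : e'' → e'`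
of `h` with `f ∘ h̃ = f'`. -/
def IsCartesianMorph {E : Type*} {B : Type*} [Category E] [Category B] (p : E ⥤ B)
    {e' e : E} (f : e' ⟶ e) : Prop :=
  ∀ {e'' : E} (f' : e'' ⟶ e) (h : p.obj e'' ⟶ p.obj e'),
    p.map f' = h ≫ p.map f →
      ∃! ht : e'' ⟶ e', p.map ht = h ∧ ht ≫ f = f'

/-- `p` is a Grothendieck fibration if every morphism of the base into the image of an
object admits a cartesian lift with that target. -/
def IsGrothendieckFibration {E : Type*} {B : Type*} [Category E] [Category B]
    (p : E ⥤ B) : Prop :=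
  ∀ (e : E) (b : B) (g : b ⟶ p.obj e),
    ∃ (e' : E) (f : e' ⟶ e) (hb : p.obj e' = b),
      IsCartesianMorph p f ∧ p.map f = eqToHom hb ≫ g

lemma sub_sub_one_add_one {n m : ℕ} (h : n < m) : m - n - 1 + 1 = m - n :=
  Nat.sub_add_cancel (Nat.sub_pos_of_lt h)

/-- A strictly monotone map factors through a strictly monotone `f` once its range
lies in that of `f`. -/
lemma exists_factor {a b c : ℕ} {f : Fin a → Fin c} {u : Fin b → Fin c} (hf : StrictMono f)
    (hu : StrictMono u) (h : ∀ x, u x ∈ Set.range f) :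
    ∃ v : Fin b → Fin a, StrictMono v ∧ ∀ x, f (v x) = u x := by
  choose v hv using h
  refine ⟨v, fun x y hxy => ?_, hv⟩
  rw [← hf.lt_iff_lt, hv, hv]
  exact hu hxy

/-- The complement map of `X = ([m], i)`, reindexed so that its source is literally the set
underlying the object `[m - n - 1]` of `Δ_inj`. -/
def DObj.compl {n : ℕ} (X : DObj n) : Fin (X.m - n - 1 + 1) → Fin (X.m + 1) :=
  fun x => complMap X.i X.hi.injective (Fin.cast (sub_sub_one_add_one X.hm) x)

lemma DObj.compl_strictMono {n : ℕ} (X : DObj n) : StrictMono X.compl := by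
  intro x y hxy
  simp only [DObj.compl, complMap, Subtype.coe_lt_coe, OrderIso.lt_iff_lt]
  exact hxy

lemma DObj.mem_range_compl {n : ℕ} (X : DObj n) (y : Fin (X.m + 1)) :
    y ∈ Set.range X.compl ↔ y ∉ Set.range X.i := by
  have hc : ((Finset.univ.image X.i)ᶜ).card = X.m - n := by
    rw [Finset.card_compl, Finset.card_image_of_injective _ X.hi.injective]
    simp [Nat.succ_sub_succ]
  constructor
  · rintro ⟨x, rfl⟩
    have := (((Finset.univ.image X.i)ᶜ.orderIsoOfFin hc)
      (Fin.cast (sub_sub_one_add_one X.hm) x)).2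
    rw [Finset.mem_compl, Finset.mem_image] at this
    rintro ⟨a, ha⟩
    exact this ⟨a, Finset.mem_univ a, ha⟩
  · intro hy
    have hy' : y ∈ (Finset.univ.image X.i)ᶜ := by simpa using hy
    refine ⟨Fin.cast (sub_sub_one_add_one X.hm).symm
      (((Finset.univ.image X.i)ᶜ.orderIsoOfFin hc).symm ⟨y, hy'⟩), ?_⟩
    simp [DObj.compl, complMap]

lemma exists_gammaMap {n : ℕ} {X Y : DObj n} (f : X ⟶ Y) :
    ∃ g : Fin (X.m - n - 1 + 1) → Fin (Y.m - n - 1 + 1),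
      StrictMono g ∧ ∀ x, Y.compl (g x) = f.1 (X.compl x) := by
  refine exists_factor Y.compl_strictMono (f.2.1.comp X.compl_strictMono) fun x => ?_
  rw [Y.mem_range_compl]
  rintro ⟨a, ha⟩
  exact (X.mem_range_compl _).1 ⟨x, rfl⟩
    ⟨a, f.2.1.injective ((congrFun f.2.2 a).trans ha)⟩

/-- The action of `γ_n` on morphisms: the unique map with `Y^c ∘ gammaMap f = f ∘ X^c`. -/
noncomputable def gammaMap {n : ℕ} {X Y : DObj n} (f : X ⟶ Y) :
    Fin (X.m - n - 1 + 1) → Fin (Y.m - n - 1 + 1) :=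
  (exists_gammaMap f).choose

lemma gammaMap_strictMono {n : ℕ} {X Y : DObj n} (f : X ⟶ Y) : StrictMono (gammaMap f) :=
  (exists_gammaMap f).choose_spec.1

lemma compl_gammaMap {n : ℕ} {X Y : DObj n} (f : X ⟶ Y) (x : Fin (X.m - n - 1 + 1)) :
    Y.compl (gammaMap f x) = f.1 (X.compl x) :=
  (exists_gammaMap f).choose_spec.2 x

/-- The functor `γ_n : D_n ⥤ Δ_inj`, `([m], i) ↦ [m - n - 1]`. -/
noncomputable def gamma (n : ℕ) : DObj n ⥤ DeltaInj where
  obj X := ⟨X.m - n - 1⟩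
  map f := ⟨gammaMap f, gammaMap_strictMono f⟩
  map_id X := Subtype.ext <| funext fun x =>
    X.compl_strictMono.injective (compl_gammaMap (𝟙 X) x)
  map_comp {X Y Z} f g := Subtype.ext <| funext fun x => Z.compl_strictMono.injective <| by
    rw [compl_gammaMap]
    change g.1 (f.1 (X.compl x)) = Z.compl (gammaMap g (gammaMap f x))
    rw [compl_gammaMap, compl_gammaMap]

lemma gamma_cartesian {n : ℕ} {e' e : DObj n} (f : e' ⟶ e) : IsCartesianMorph (gamma n) f := by
  intro e'' f' h hh
  have hh' : ∀ x, gammaMap f' x = gammaMap f (h.1 x) := fun x =>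
    congrFun (congrArg Subtype.val hh) x
  -- On unmarked points, `f'` agrees with `f ∘ e'^c ∘ h`.
  have key : ∀ x, f'.1 (e''.compl x) = f.1 (e'.compl (h.1 x)) := fun x =>
    (compl_gammaMap f' x).symm.trans
      ((congrArg e.compl (hh' x)).trans (compl_gammaMap f (h.1 x)))
  have hr : ∀ y, f'.1 y ∈ Set.range f.1 := by
    intro y
    by_cases hy : y ∈ Set.range e''.i
    · obtain ⟨a, rfl⟩ := hy
      exact ⟨e'.i a, (congrFun f.2.2 a).trans (congrFun f'.2.2 a).symm⟩
    · obtain ⟨x, rfl⟩ := (e''.mem_range_compl y).2 hy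
      exact ⟨_, (key x).symm⟩
  obtain ⟨v, hv, hfv⟩ := exists_factor f.2.1 f'.2.1 hr
  refine ⟨⟨v, hv, ?_⟩, ⟨?_, ?_⟩, ?_⟩
  · funext a
    apply f.2.1.injective
    exact (hfv _).trans ((congrFun f'.2.2 a).trans (congrFun f.2.2 a).symm)
  · refine Subtype.ext <| funext fun x => e'.compl_strictMono.injective (f.2.1.injective ?_)
    exact (congrArg f.1 (compl_gammaMap _ x)).trans ((hfv _).trans (key x))
  · exact Subtype.ext (funext hfv)
  · rintro w ⟨-, hw⟩
    refine Subtype.ext <| funext fun x => f.2.1.injective ?_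
    exact (congrFun (congrArg Subtype.val hw) x).trans (hfv x).symm

lemma eqToHom_val {a b : DeltaInj} (h : a = b) (x : Fin (a.n + 1)) :
    (eqToHom h).1 x = Fin.cast (by rw [h]) x := by
  subst h
  rfl

lemma exists_lift {n : ℕ} (e : DObj n) (b : DeltaInj) (g : b ⟶ (gamma n).obj e) :
    ∃ (e' : DObj n) (f : e' ⟶ e) (hb : (gamma n).obj e' = b),
      (gamma n).map f = eqToHom hb ≫ g := by
  obtain ⟨k⟩ := b
  -- `c = e^c ∘ g` lists the unmarked points of the lift.
  let c : Fin (k + 1) → Fin (e.m + 1) := fun x => e.compl (g.1 x)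
  have hc : StrictMono c := e.compl_strictMono.comp g.2
  have hdis : ∀ x, c x ∉ Set.range e.i := fun x => (e.mem_range_compl _).1 ⟨_, rfl⟩
  let S : Finset (Fin (e.m + 1)) := Finset.univ.image e.i ∪ Finset.univ.image c
  have hS : S.card = n + k + 1 + 1 := by
    rw [Finset.card_union_of_disjoint, Finset.card_image_of_injective _ e.hi.injective,
      Finset.card_image_of_injective _ hc.injective]
    · simp; omega
    · rw [Finset.disjoint_left]
      intro y hy hy'
      simp only [Finset.mem_image, Finset.mem_univ, true_and] at hy hy'
      obtain ⟨x, rfl⟩ := hy'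
      exact hdis x hy
  let F : Fin (n + k + 1 + 1) → Fin (e.m + 1) := S.orderEmbOfFin hS
  have hF : StrictMono F := (S.orderEmbOfFin hS).strictMono
  have hFr : ∀ y, y ∈ Set.range F ↔ y ∈ Set.range e.i ∨ y ∈ Set.range c := fun y => by
    simp [F, S]
  obtain ⟨i, hi, hFi⟩ := exists_factor hF e.hi fun x => (hFr _).2 (Or.inl ⟨x, rfl⟩)
  let e' : DObj n := ⟨n + k + 1, by omega, i, hi⟩
  let f : e' ⟶ e := ⟨F, hF, funext hFi⟩
  have hk : e'.m - n - 1 = k := by change n + k + 1 - n - 1 = k; omega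
  have hb : (gamma n).obj e' = ⟨k⟩ := congrArg DeltaInj.mk hk
  refine ⟨e', f, hb, ?_⟩
  have hcast : StrictMono fun x : Fin (e'.m - n - 1 + 1) => c (Fin.cast (by rw [hk]) x) :=
    fun x y hxy => hc hxy
  -- Strictly monotone maps out of a finite ordinal are determined by their ranges.
  have main : (fun x => F (e'.compl x)) =
      fun x : Fin (e'.m - n - 1 + 1) => c (Fin.cast (by rw [hk]) x) := by
    refine ((hF.comp e'.compl_strictMono).range_inj hcast).1 (Set.ext fun y => ?_)
    constructor
    · rintro ⟨x, rfl⟩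
      have hx := (e'.mem_range_compl _).1 ⟨x, rfl⟩
      rcases (hFr (F (e'.compl x))).1 ⟨_, rfl⟩ with ⟨a, ha⟩ | ⟨z, hz⟩
      · rw [← hFi] at ha
        exact (hx ⟨a, hF.injective ha⟩).elim
      · exact ⟨Fin.cast (by rw [hk]) z, hz⟩
    · rintro ⟨x, rfl⟩
      obtain ⟨z, hz⟩ := (hFr _).2 (Or.inr ⟨Fin.cast (by rw [hk]) x, rfl⟩)
      have hz' : z ∉ Set.range e'.i := by
        rintro ⟨a, rfl⟩
        exact hdis _ ⟨a, (hFi a).symm.trans hz⟩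
      obtain ⟨w, rfl⟩ := (e'.mem_range_compl z).2 hz'
      exact ⟨w, hz⟩
  refine Subtype.ext <| funext fun x => e.compl_strictMono.injective ?_
  exact (compl_gammaMap f x).trans ((congrFun main x).trans
    (congrArg (fun z => e.compl (g.1 z)) (eqToHom_val hb x).symm))

theorem stmt12 (n : ℕ) :
    ∃ γ : DObj n ⥤ DeltaInj,
      ∃ hobj : ∀ X : DObj n, (γ.obj X).n = X.m - n - 1,
        (∀ (X Y : DObj n) (f : X ⟶ Y) (x : Fin (X.m - n)),
          f.1 (complMap X.i X.hi.injective x) =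
            complMap Y.i Y.hi.injective
              (Fin.cast (by have := Y.hm; rw [hobj Y]; omega)
                ((γ.map f).1
                  (Fin.cast (by have := X.hm; rw [hobj X]; omega) x)))) ∧
        IsGrothendieckFibration γ := by
  refine ⟨gamma n, fun X => rfl, fun X Y f x => ?_, fun e b g => ?_⟩
  · exact (compl_gammaMap f (Fin.cast (sub_sub_one_add_one X.hm).symm x)).symm
  · obtain ⟨e', f, hb, hf⟩ := exists_lift e b g
    exact ⟨e', f, hb, gamma_cartesian f, hf⟩
end

section
/- Let B be a small category and X : Bᵒᵖ → Type a presheaf on B. Let E be the category of elements of X: objects are pairs (b, x) with b ∈ B and x ∈ X(b), and morphisms (b, x) → (b', x') are morphisms g : b → b' in B with X(g)(x') = x. Let A be a category with all small limits and F : E → A a functor. Define G : B → A by G(b) = ∏_{x ∈ X(b)} F(b, x), where for g : b → b' the map G(b) → G(b') has component at x' ∈ X(b') the projection of G(b) onto the factor indexed by X(g)(x') followed by F applied to the morphism (b, X(g)(x')) → (b', x') determined by g. Then the limit of F over E exists if and only if the limit of G over B exists, and in that case lim_E F ≅ lim_B G. -/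
/-!
A cone over `F` with apex `a` is a family `a ⟶ F(b, x)`, indexed by all `b` and `x ∈ X(b)`,
compatible with the morphisms of `Elem X`. By the universal property of the products this is
the same as a family `a ⟶ ∏ₓ F(b, x)` indexed by `b`. Every morphism of `Elem X` is, up to
its unique domain, the cartesian lift of a morphism `g` of `B` to an element `x'` over its target,
so the two compatibility conditions agree as well. The two passages `coneToFiber` and
`coneOfFiber` keep the apex, and applied to the limit cones they give mutually inverse
comparison maps. Both limits exist because `A` has all small limits.
-/

/-!
STATEMENT 13: Let `B` be a small category, `X : Bᵒᵖ ⥤ Type` a presheaf, `E` the category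
of elements of `X` (objects `(b, x)` with `x ∈ X(b)`; morphisms `(b,x) → (b',x')` the
`g : b → b'` with `X(g)(x') = x`), `A` a category with all small limits, and
`F : E ⥤ A`. Define `G : B ⥤ A` by `G(b) = ∏_{x ∈ X(b)} F(b, x)`, with structure map at
`g : b ⟶ b'` having component at `x'` the projection onto the factor `X(g)(x')` followed
by `F` of the morphism `(b, X(g)(x')) → (b', x')` determined by `g`. Then `lim F` exists
iff `lim G` exists, and in that case `lim F ≅ lim G`.
-/

open CategoryTheory Limits Opposite

universe u v w

variable {B : Type u} [SmallCategory B] (X : Bᵒᵖ ⥤ Type u)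

/-- The category of elements of a presheaf `X : Bᵒᵖ ⥤ Type`: objects are pairs `(b, x)`
with `x ∈ X(b)`, and morphisms `(b, x) → (b', x')` are the `g : b ⟶ b'` with
`X(g)(x') = x`. -/
structure Elem where
  base : B
  elt : X.obj (op base)

instance : Category (Elem X) where
  Hom e e' := {g : e.base ⟶ e'.base // X.map g.op e'.elt = e.elt}
  id e := ⟨𝟙 e.base, by simp⟩
  comp {e e' e''} f g := ⟨f.1 ≫ g.1, by
    rw [op_comp, X.map_comp, types_comp_apply, g.2, f.2]⟩
  id_comp f := Subtype.ext (Category.id_comp f.1)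
  comp_id f := Subtype.ext (Category.comp_id f.1)
  assoc f g h := Subtype.ext (Category.assoc f.1 g.1 h.1)

variable {A : Type v} [Category.{w} A] [HasLimitsOfSize.{u, u} A]
variable (F : Elem X ⥤ A)

private lemma pi_π_comp_map_eq {b : B} {y x' : X.obj (op b)} (h : y = x')
    {e : Elem X} (g : (⟨b, y⟩ : Elem X) ⟶ e) (g' : (⟨b, x'⟩ : Elem X) ⟶ e)
    (hg : g.1 = g'.1) :
    Pi.π (fun x : X.obj (op b) => F.obj ⟨b, x⟩) y ≫ F.map g =
      Pi.π (fun x : X.obj (op b) => F.obj ⟨b, x⟩) x' ≫ F.map g' := by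
  subst h
  obtain rfl : g = g' := Subtype.ext hg
  rfl

/-- The fiberwise-product functor `G : B ⥤ A`, `G(b) = ∏_{x ∈ X(b)} F(b, x)`. -/
noncomputable def fiberProd : B ⥤ A where
  obj b := ∏ᶜ fun x : X.obj (op b) => F.obj ⟨b, x⟩
  map {b b'} g := Pi.lift fun x' : X.obj (op b') =>
    Pi.π (fun x : X.obj (op b) => F.obj ⟨b, x⟩) (X.map g.op x') ≫ F.map ⟨g, rfl⟩
  map_id b := by
    ext x'
    simp only [limit.lift_π, Fan.mk_pt, Fan.mk_π_app, Category.id_comp]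
    refine (pi_π_comp_map_eq X F (y := X.map (𝟙 b).op x') (x' := x')
      (by simp) ⟨𝟙 b, rfl⟩ (𝟙 (⟨b, x'⟩ : Elem X)) rfl).trans ?_
    rw [CategoryTheory.Functor.map_id, Category.comp_id]
  map_comp {b b' b''} g g' := by
    ext x''
    simp only [limit.lift_π, Fan.mk_pt, Fan.mk_π_app, Category.assoc,
      limit.lift_π_assoc]
    rw [← F.map_comp]
    exact pi_π_comp_map_eq X F (y := X.map (g ≫ g').op x'')
      (x' := X.map g.op (X.map g'.op x'')) (by simp) ⟨g ≫ g', rfl⟩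
      ((⟨g, rfl⟩ : (⟨b, X.map g.op (X.map g'.op x'')⟩ : Elem X) ⟶ ⟨b', X.map g'.op x''⟩) ≫
        (⟨g', rfl⟩ : (⟨b', X.map g'.op x''⟩ : Elem X) ⟶ ⟨b'', x''⟩)) rfl

section Comparison

/-- The projection of `G(b)` onto the factor indexed by `x`, typed over `fiberProd X F`. -/
noncomputable def fiberπ (b : B) (x : X.obj (op b)) : (fiberProd X F).obj b ⟶ F.obj ⟨b, x⟩ :=
  Pi.π (fun x : X.obj (op b) => F.obj ⟨b, x⟩) x

/-- The cone over `fiberProd X F` whose leg at `b` is assembled from the legs at all `(b, x)`. -/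
noncomputable def coneToFiber (c : Cone F) : Cone (fiberProd X F) where
  pt := c.pt
  π :=
    { app := fun b => Pi.lift fun x : X.obj (op b) => c.π.app ⟨b, x⟩
      naturality := by
        intro b b' g
        refine Pi.hom_ext _ _ fun x' => ?_
        have h := c.w (⟨g, rfl⟩ : (⟨b, X.map g.op x'⟩ : Elem X) ⟶ ⟨b', x'⟩)
        simp [fiberProd, h] }

/-- The cone over `F` whose leg at `(b, x)` is the `x`-component of the leg at `b`. -/
noncomputable def coneOfFiber (c : Cone (fiberProd X F)) : Cone F where
  pt := c.pt
  π :=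
    { app := fun e => c.π.app e.base ≫
        Pi.π (fun x : X.obj (op e.base) => F.obj ⟨e.base, x⟩) e.elt
      naturality := by
        -- The source element is determined by the base morphism and the target element.
        rintro ⟨b, x⟩ ⟨b', x'⟩ ⟨g, hg⟩
        change b ⟶ b' at g
        change X.map g.op x' = x at hg
        subst hg
        have h := c.w g
        dsimp
        rw [Category.id_comp, ← h]
        simp [fiberProd] }

end Comparison

theorem stmt13 :
    (HasLimit F ↔ HasLimit (fiberProd X F)) ∧
    Nonempty (limit F ≅ limit (fiberProd X F)) := by
  refine ⟨⟨fun _ => inferInstance, fun _ => inferInstance⟩, ?_⟩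
  obtain ⟨φ, hφ⟩ : ∃ φ : limit F ⟶ limit (fiberProd X F), ∀ b x,
      φ ≫ limit.π (fiberProd X F) b ≫ fiberπ X F b x = limit.π F ⟨b, x⟩ :=
    ⟨limit.lift _ (coneToFiber X F (limit.cone F)), fun b x =>
      (limit.lift_π_assoc (coneToFiber X F (limit.cone F)) b (fiberπ X F b x)).trans
        (Pi.lift_π (fun x : X.obj (op b) => (limit.cone F).π.app ⟨b, x⟩) x)⟩
  obtain ⟨ψ, hψ⟩ : ∃ ψ : limit (fiberProd X F) ⟶ limit F, ∀ b x,
      ψ ≫ limit.π F ⟨b, x⟩ = limit.π (fiberProd X F) b ≫ fiberπ X F b x :=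
    ⟨limit.lift _ (coneOfFiber X F (limit.cone (fiberProd X F))), fun b x =>
      limit.lift_π (coneOfFiber X F (limit.cone (fiberProd X F))) ⟨b, x⟩⟩
  refine ⟨⟨φ, ψ, limit.hom_ext fun ⟨b, x⟩ => ?_,
    limit.hom_ext fun b => Pi.hom_ext _ _ fun x => ?_⟩⟩
  · rw [Category.assoc, hψ, hφ, Category.id_comp]
  · change ((ψ ≫ φ) ≫ limit.π (fiberProd X F) b) ≫ fiberπ X F b x =
      (𝟙 _ ≫ limit.π (fiberProd X F) b) ≫ fiberπ X F b x
    rw [Category.assoc, Category.assoc, hφ, hψ, Category.id_comp]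
end
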